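/- Let Γ ⊂ PSL(3,ℂ) be a discrete group and let Ω ⊆ ℙ²_ℂ be either Eq(Γ), the Kulkarni discontinuity region Ω(Γ), or a maximal open set on which Γ acts properly discontinuously, with 4 ≤ LiG(Ω) < ∞. Let ℒ be a family of complex lines in general position contained in ℙ²_ℂ∖Ω with card(ℒ) = LiG(Ω). Then ℒ has at least one vertex, and for every vertex v of ℒ the isotropy subgroup Isot(v, Γ) = {γ ∈ Γ : γ(v) = v} has finite index in Γ. -/

import Mathlib

/-!
Call a line contained in `Ωᶜ` a limit line. In all three cases `Ω` is `Γ`-invariant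
(`omega_invariant`), so `Γ` permutes the limit lines.

Since `L` has the maximal, finite, cardinality, every limit line passes through one of the finitely
many points `ℓ₁ ∩ ℓ₂` with `ℓ₁ ≠ ℓ₂` in `L` (`exists_crossing`); call these the crossings.

*Existence of a vertex.* By the pigeonhole principle it is enough to have infinitely many limit
lines. If there were only finitely many, then, because a projective transformation preserving four
lines in general position is the identity (`eq_one_of_four_lines`), `Γ` would embed into the finite
set of maps from `L` to the limit lines, so `Γ` would be finite. But for a finite group `Ω` is all
of `ℙ²` (`omega_eq_univ_of_finite`), and there are no limit lines at all.

*Finite index.* A vertex lies on infinitely many limit lines. The set of points with this property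
is `Γ`-invariant, and it consists of crossings, since a point which is not a crossing is joined to
the crossings by finitely many lines. Hence the orbit of a vertex is finite.
-/

open scoped LinearAlgebra.Projectivization
open Projectivization Matrix Topology

noncomputable section

abbrev V3 : Type := Fin 3 → ℂ
abbrev SL3 := Matrix.SpecialLinearGroup (Fin 3) ℂ
abbrev PSL3 := SL3 ⧸ Subgroup.center SL3
abbrev P2 := ℙ ℂ V3

instance : TopologicalSpace P2 := instTopologicalSpaceQuotient

/-- The action of `SL(3,ℂ)` on `ℙ²_ℂ`. -/
def smulP2 (A : SL3) : P2 → P2 :=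
  Projectivization.map ((Matrix.SpecialLinearGroup.toLin' A : V3 ≃ₗ[ℂ] V3) : V3 →ₗ[ℂ] V3)
    (Matrix.SpecialLinearGroup.toLin' A).injective

lemma smulP2_mk (A : SL3) (v : V3) (hv : v ≠ 0) :
    smulP2 A (Projectivization.mk ℂ v hv) =
      Projectivization.mk ℂ (Matrix.SpecialLinearGroup.toLin' A v)
        ((Matrix.SpecialLinearGroup.toLin' A).map_ne_zero_iff.mpr hv) := rfl

lemma smulP2_one : smulP2 (1 : SL3) = id := by
  funext x
  induction x using Projectivization.ind with
  | h v hv => simp [smulP2_mk]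

lemma smulP2_mul (A B : SL3) : smulP2 (A * B) = smulP2 A ∘ smulP2 B := by
  funext x
  induction x using Projectivization.ind with
  | h v hv =>
    simp only [smulP2_mk, Function.comp_apply, _root_.map_mul]
    rfl

lemma continuous_smulP2 (A : SL3) : Continuous (smulP2 A) := by
  unfold smulP2 Projectivization.map
  exact Continuous.quotient_map'
    ((((Matrix.SpecialLinearGroup.toLin' A : V3 ≃ₗ[ℂ] V3) :
        V3 →ₗ[ℂ] V3).continuous_of_finiteDimensional.comp
      continuous_subtype_val).subtype_mk _) _
lemma smulP2_center (A : SL3) (hA : A ∈ Subgroup.center SL3) : smulP2 A = id := by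
  obtain ⟨r, hr3, hrA⟩ := Matrix.SpecialLinearGroup.mem_center_iff.mp hA
  have hr0 : r ≠ 0 := by
    intro h
    rw [h] at hr3
    simp at hr3
  funext x
  induction x using Projectivization.ind with
  | h v hv =>
    have hAv : Matrix.SpecialLinearGroup.toLin' A v = r • v := by
      rw [Matrix.SpecialLinearGroup.toLin'_apply]
      have : ((A : Matrix (Fin 3) (Fin 3) ℂ)) = Matrix.scalar (Fin 3) r := by
        rw [← hrA]
      rw [this]
      funext i
      simp [Matrix.toLin'_apply, Matrix.scalar, Matrix.mulVec_diagonal]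
  
    simp only [smulP2_mk, id_eq]
    rw [Projectivization.mk_eq_mk_iff]
    exact ⟨Units.mk0 r hr0, by simp [hAv]⟩

/-- The action of `SL(3,ℂ)` on `ℙ²` as a homomorphism into permutations. -/
def slPerm : SL3 →* Equiv.Perm P2 where
  toFun A :=
    { toFun := smulP2 A
      invFun := smulP2 A⁻¹
      left_inv := fun x => by
        have := (smulP2_mul A⁻¹ A).symm
        simp only [inv_mul_cancel, smulP2_one] at this
        exact congrFun this x
      right_inv := fun x => by
        have := (smulP2_mul A A⁻¹).symm
        simp only [mul_inv_cancel, smulP2_one] at this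
        exact congrFun this x }
  map_one' := by
    ext x
    simp [smulP2_one]
  map_mul' A B := by
    ext x
    simp [smulP2_mul]

/-- The action of `PSL(3,ℂ)` on `ℙ²` as a homomorphism into permutations. -/
def actHom : PSL3 →* Equiv.Perm P2 :=
  QuotientGroup.lift (Subgroup.center SL3) slPerm (by
    intro A hA
    ext x
    simpa [slPerm] using congrFun (smulP2_center A hA) x)

/-- The action of an element of `PSL(3,ℂ)` on `ℙ²`. -/
def pact (g : PSL3) : P2 → P2 := actHom g

instance : MulAction PSL3 P2 where
  smul g x := pact g x
  one_smul x := by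
    show pact 1 x = x
    simp [pact]
  mul_smul g h x := by
    show pact (g * h) x = pact g (pact h x)
    simp [pact]

lemma pact_mk (A : SL3) : pact ((QuotientGroup.mk A : PSL3)) = smulP2 A := by
  funext x
  simp [pact, actHom, slPerm]

lemma continuous_pact (g : PSL3) : Continuous (pact g) := by
  obtain ⟨A, rfl⟩ := QuotientGroup.mk_surjective g
  rw [pact_mk]
  exact continuous_smulP2 A

/-- The action of an element of `PSL(3,ℂ)` on `ℙ²`, as a continuous map. -/
def pactCM (g : PSL3) : C(P2, P2) := ⟨pact g, continuous_pact g⟩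
instance : TopologicalSpace SL3 := instTopologicalSpaceSubtype

/-- A complex line in `ℙ²_ℂ`: the set of points whose representing vectors lie in
a fixed 2-dimensional complex linear subspace of `ℂ³`. -/
def IsLine (ℓ : Set P2) : Prop :=
  ∃ W : Submodule ℂ V3, Module.finrank ℂ W = 2 ∧ ℓ = {p : P2 | p.submodule ≤ W}

/-- The set of complex lines contained in a given subset of `ℙ²_ℂ`. -/
def linesIn (S : Set P2) : Set (Set P2) := {ℓ | IsLine ℓ ∧ ℓ ⊆ S}

/-- A family of lines is in general position if no point lies on three
(pairwise distinct) lines of the family. -/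
def InGenPos (L : Set (Set P2)) : Prop :=
  ∀ p : P2, ∀ ℓ₁ ∈ L, ∀ ℓ₂ ∈ L, ∀ ℓ₃ ∈ L,
    p ∈ ℓ₁ → p ∈ ℓ₂ → p ∈ ℓ₃ → ℓ₁ = ℓ₂ ∨ ℓ₁ = ℓ₃ ∨ ℓ₂ = ℓ₃

/-- The families of complex lines in general position contained in the complement of `Ω`. -/
def genFamilies (Ω : Set P2) : Set (Set (Set P2)) :=
  {L | (∀ ℓ ∈ L, IsLine ℓ ∧ ℓ ⊆ Ωᶜ) ∧ InGenPos L}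

/-- `Li Ω` : the number (in `ℕ∞`) of complex lines contained in the complement of `Ω`. -/
def Li (Ω : Set P2) : ℕ∞ := (linesIn Ωᶜ).encard

/-- `LiG Ω` : the maximal number (in `ℕ∞`) of complex lines in general position contained
in the complement of `Ω`. -/
def LiG (Ω : Set P2) : ℕ∞ := ⨆ L ∈ genFamilies Ω, L.encard

/-- `Γ` acts properly discontinuously on the nonempty open invariant set `Ω`. -/
def ActsPropDiscOn (Γ : Subgroup PSL3) (Ω : Set P2) : Prop :=
  Ω.Nonempty ∧ IsOpen Ω ∧ (∀ γ ∈ Γ, pact γ '' Ω = Ω) ∧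
    ∀ K : Set P2, K ⊆ Ω → IsCompact K →
      {γ : PSL3 | γ ∈ Γ ∧ ((pact γ '' K) ∩ K).Nonempty}.Finite

/-- `Ω` is a maximal open set on which `Γ` acts properly discontinuously. -/
def MaxDisc (Γ : Subgroup PSL3) (Ω : Set P2) : Prop :=
  ActsPropDiscOn Γ Ω ∧ ∀ Ω' : Set P2, ActsPropDiscOn Γ Ω' → Ω ⊆ Ω' → Ω' = Ω

/-- `L0 Γ` : the closure of the set of points with infinite isotropy group. -/
def L0 (Γ : Subgroup PSL3) : Set P2 :=
  closure {z : P2 | {γ : PSL3 | γ ∈ Γ ∧ pact γ z = z}.Infinite}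

/-- The cluster points of the orbit `Γ z`. -/
def orbitCluster (Γ : Subgroup PSL3) (z : P2) : Set P2 :=
  {w : P2 | ∀ U ∈ nhds w, {γ : PSL3 | γ ∈ Γ ∧ pact γ z ∈ U}.Infinite}

/-- The cluster points of `Γ K` for a set `K`. -/
def setCluster (Γ : Subgroup PSL3) (K : Set P2) : Set P2 :=
  {w : P2 | ∀ U ∈ nhds w, {γ : PSL3 | γ ∈ Γ ∧ ((pact γ '' K) ∩ U).Nonempty}.Infinite}

/-- `L1 Γ` : the closure of the set of cluster points of orbits `Γ z`, `z ∉ L0 Γ`. -/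
def L1 (Γ : Subgroup PSL3) : Set P2 :=
  closure (⋃ z ∈ (L0 Γ)ᶜ, orbitCluster Γ z)

/-- `L2 Γ` : the closure of the set of cluster points of `Γ K`,
`K` a compact subset of `ℙ²_ℂ ∖ (L0 Γ ∪ L1 Γ)`. -/
def L2 (Γ : Subgroup PSL3) : Set P2 :=
  closure (⋃ K ∈ {K : Set P2 | IsCompact K ∧ K ⊆ (L0 Γ ∪ L1 Γ)ᶜ}, setCluster Γ K)

/-- The Kulkarni limit set `Λ(Γ)`. -/
def kulkarniLimit (Γ : Subgroup PSL3) : Set P2 := L0 Γ ∪ L1 Γ ∪ L2 Γ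

/-- The Kulkarni discontinuity region `Ω(Γ)`. -/
def kulkarniRegion (Γ : Subgroup PSL3) : Set P2 := (kulkarniLimit Γ)ᶜ

/-- `C(Γ)` : the closure of the union of the Kulkarni limit sets of the cyclic
subgroups generated by the elements of `Γ`. -/
def CSet (Γ : Subgroup PSL3) : Set P2 :=
  closure (⋃ γ ∈ Γ, kulkarniLimit (Subgroup.zpowers γ))

/-- The equicontinuity set of `Γ` : points having a neighborhood `U` on which the
restrictions of the elements of `Γ` form a normal family, i.e. a relatively compact
subset of `C(U, ℙ²_ℂ)` for the compact-open topology. -/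
def eqSet (Γ : Subgroup PSL3) : Set P2 :=
  {z : P2 | ∃ U : Set P2, IsOpen U ∧ z ∈ U ∧
    IsCompact (closure {f : C(U, P2) | ∃ γ ∈ Γ, f = (pactCM γ).restrict U})}

/-- A vertex of a family `L` of lines lying in the complement of `Ω`. -/
def IsVertex (Ω : Set P2) (L : Set (Set P2)) (v : P2) : Prop :=
  ∃ ℓ₁ ∈ L, ∃ ℓ₂ ∈ L, ℓ₁ ≠ ℓ₂ ∧ ∃ C : Set (Set P2), C.Infinite ∧
    (∀ ℓ ∈ C, IsLine ℓ ∧ ℓ ⊆ Ωᶜ) ∧ ℓ₁ ∩ ℓ₂ ∩ ⋂₀ C = {v}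

open Classical

/-- Projection from the point `p` onto the line determined by `W` : `projPt p W x` is
the intersection point of the line through `p` and `x` with the line determined by `W`
(junk value if it is not unique). -/
def projPt (p : P2) (W : Submodule ℂ V3) (x : P2) : P2 :=
  if h : ∃ y : P2, y.submodule ≤ W ∧ y.submodule ≤ p.submodule ⊔ x.submodule
  then h.choose else x

/-! ### Points and lines -/

lemma mk_mem_line {W : Submodule ℂ V3} {v : V3} (hv : v ≠ 0) :
    Projectivization.mk ℂ v hv ∈ {p : P2 | p.submodule ≤ W} ↔ v ∈ W := by
  simp [Projectivization.submodule_mk]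

lemma rep_mem_iff {W : Submodule ℂ V3} {p : P2} : p.submodule ≤ W ↔ p.rep ∈ W := by
  rw [Projectivization.submodule_eq, Submodule.span_singleton_le_iff_mem]

lemma eq_span_pair {W : Submodule ℂ V3} (hW : Module.finrank ℂ W = 2) {p q : P2} (hpq : p ≠ q)
    (hp : p.rep ∈ W) (hq : q.rep ∈ W) : W = Submodule.span ℂ {p.rep, q.rep} := by
  have hli := Projectivization.linearIndependent_pair_iff_ne.mpr hpq
  have hrange : Set.range ![p.rep, q.rep] = {p.rep, q.rep} := by
    simp [Set.pair_comm]
  have h2 : Module.finrank ℂ (Submodule.span ℂ {p.rep, q.rep}) = 2 := by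
    rw [← hrange, finrank_span_eq_card hli, Fintype.card_fin]
  symm
  apply Submodule.eq_of_le_of_finrank_eq
  · rw [Submodule.span_le]
    rintro x (rfl | rfl)
    · exact hp
    · exact hq
  · rw [h2, hW]

lemma line_unique {ℓ ℓ' : Set P2} (h : IsLine ℓ) (h' : IsLine ℓ') {p q : P2} (hpq : p ≠ q)
    (hp : p ∈ ℓ) (hq : q ∈ ℓ) (hp' : p ∈ ℓ') (hq' : q ∈ ℓ') : ℓ = ℓ' := by
  obtain ⟨W, hW, rfl⟩ := h
  obtain ⟨W', hW', rfl⟩ := h'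
  rw [eq_span_pair hW hpq (rep_mem_iff.mp hp) (rep_mem_iff.mp hq),
    eq_span_pair hW' hpq (rep_mem_iff.mp hp') (rep_mem_iff.mp hq')]

lemma lines_meet {ℓ ℓ' : Set P2} (h : IsLine ℓ) (h' : IsLine ℓ') : ∃ p, p ∈ ℓ ∧ p ∈ ℓ' := by
  obtain ⟨W, hW, rfl⟩ := h
  obtain ⟨W', hW', rfl⟩ := h'
  have h1 := Submodule.finrank_sup_add_finrank_inf_eq W W'
  have h2 : Module.finrank ℂ ↥(W ⊔ W') ≤ 3 := by
    simpa using Submodule.finrank_le (W ⊔ W')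
  have h3 : W ⊓ W' ≠ ⊥ := by
    intro h0
    rw [h0, finrank_bot] at h1
    omega
  obtain ⟨v, hv, hv0⟩ := Submodule.exists_mem_ne_zero_of_ne_bot h3
  exact ⟨Projectivization.mk ℂ v hv0, (mk_mem_line hv0).mpr hv.1, (mk_mem_line hv0).mpr hv.2⟩

lemma isLine_image (g : PSL3) {ℓ : Set P2} (h : IsLine ℓ) : IsLine (pact g '' ℓ) := by
  obtain ⟨W, hW, rfl⟩ := h
  obtain ⟨A, rfl⟩ := QuotientGroup.mk_surjective g
  let e : V3 ≃ₗ[ℂ] V3 := Matrix.SpecialLinearGroup.toLin' A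
  refine ⟨W.map (e : V3 →ₗ[ℂ] V3), ?_, ?_⟩
  · rw [LinearEquiv.finrank_map_eq, hW]
  · rw [pact_mk]
    ext q
    constructor
    · rintro ⟨p, hp, rfl⟩
      induction p using Projectivization.ind with
      | h v hv =>
        rw [mk_mem_line] at hp
        rw [smulP2_mk, mk_mem_line]
        exact Submodule.mem_map_of_mem (f := (e : V3 →ₗ[ℂ] V3)) hp
    · intro hq
      induction q using Projectivization.ind with
      | h w hw =>
        rw [mk_mem_line] at hq
        obtain ⟨v, hv, rfl⟩ := hq
        have hv0 : v ≠ 0 := by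
          rintro rfl
          simp at hw
        exact ⟨Projectivization.mk ℂ v hv0, (mk_mem_line hv0).mpr hv, rfl⟩

/-! ### A projective transformation preserving four lines in general position is trivial -/

lemma exists_eigenvalue {A : SL3} {p : P2} (h : smulP2 A p = p) :
    ∃ c : ℂ, Matrix.SpecialLinearGroup.toLin' A p.rep = c • p.rep := by
  have h1 : smulP2 A (Projectivization.mk ℂ p.rep p.rep_nonzero) =
      Projectivization.mk ℂ p.rep p.rep_nonzero := by rw [Projectivization.mk_rep, h]
  rw [smulP2_mk, Projectivization.mk_eq_mk_iff'] at h1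
  obtain ⟨c, hc⟩ := h1
  exact ⟨c, hc.symm⟩

lemma not_smul_rep {p q : P2} (hpq : p ≠ q) (c : ℂ) : c • p.rep ≠ q.rep := by
  intro h
  apply hpq
  rw [← Projectivization.mk_rep p, ← Projectivization.mk_rep q]
  symm
  rw [Projectivization.mk_eq_mk_iff']
  exact ⟨c, h⟩

/-- A linear map with three distinct fixed points on a projective line is a scalar on the
corresponding plane. -/
lemma scalar_on_line {A : SL3} {W : Submodule ℂ V3} (hW : Module.finrank ℂ W = 2) {p q r : P2}
    (hpq : p ≠ q) (hpr : p ≠ r) (hqr : q ≠ r)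
    (hp : p.rep ∈ W) (hq : q.rep ∈ W) (hr : r.rep ∈ W)
    (fp : smulP2 A p = p) (fq : smulP2 A q = q) (fr : smulP2 A r = r) :
    ∃ c : ℂ, ∀ x ∈ W, Matrix.SpecialLinearGroup.toLin' A x = c • x := by
  have hspan := eq_span_pair hW hpq hp hq
  obtain ⟨a, ha⟩ := exists_eigenvalue fp
  obtain ⟨b, hb⟩ := exists_eigenvalue fq
  obtain ⟨c, hc⟩ := exists_eigenvalue fr
  rw [hspan, Submodule.mem_span_pair] at hr
  obtain ⟨s, t, hst⟩ := hr
  have hs : s ≠ 0 := by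
    rintro rfl
    exact not_smul_rep hqr t (by simpa using hst)
  have ht : t ≠ 0 := by
    rintro rfl
    exact not_smul_rep hpr s (by simpa using hst)
  have hli := Projectivization.linearIndependent_pair_iff_ne.mpr hpq
  rw [LinearIndependent.pair_iff] at hli
  have key : (s * (a - c)) • p.rep + (t * (b - c)) • q.rep = 0 := by
    rw [← hst, map_add, map_smul, map_smul, ha, hb] at hc
    rw [← sub_eq_zero] at hc
    rw [← hc]
    module
  obtain ⟨h1, h2⟩ := hli _ _ key
  have hac : a = c := by
    rcases mul_eq_zero.mp h1 with h | h
    · exact absurd h hs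
    · exact sub_eq_zero.mp h
  have hbc : b = c := by
    rcases mul_eq_zero.mp h2 with h | h
    · exact absurd h ht
    · exact sub_eq_zero.mp h
  refine ⟨c, fun x hx => ?_⟩
  rw [hspan, Submodule.mem_span_pair] at hx
  obtain ⟨u, v, rfl⟩ := hx
  rw [map_add, map_smul, map_smul, ha, hb, hac, hbc]
  module

lemma fixes_crossing {g : PSL3} {ℓ ℓ' : Set P2} (h : IsLine ℓ) (h' : IsLine ℓ') (hne : ℓ ≠ ℓ')
    (hg : pact g '' ℓ = ℓ) (hg' : pact g '' ℓ' = ℓ') {p : P2} (hp : p ∈ ℓ) (hpm : p ∈ ℓ') :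
    pact g p = p := by
  by_contra hc
  exact hne (line_unique h h' hc (hg ▸ Set.mem_image_of_mem _ hp) hp
    (hg' ▸ Set.mem_image_of_mem _ hpm) hpm)

/-- The three points cut out on the line of `W` by `b`, `c`, `d` are fixed and distinct. -/
lemma scalar_of_four_lines {A : SL3} {L : Set (Set P2)} (hpos : InGenPos L)
    (hline : ∀ ℓ ∈ L, IsLine ℓ) (hA : ∀ ℓ ∈ L, pact (QuotientGroup.mk A : PSL3) '' ℓ = ℓ)
    {W : Submodule ℂ V3} (hW : Module.finrank ℂ W = 2) {b c d : Set P2}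
    (ha : {p : P2 | p.submodule ≤ W} ∈ L) (hb : b ∈ L) (hc : c ∈ L) (hd : d ∈ L)
    (hab : {p : P2 | p.submodule ≤ W} ≠ b) (hac : {p : P2 | p.submodule ≤ W} ≠ c)
    (had : {p : P2 | p.submodule ≤ W} ≠ d) (hbc : b ≠ c) (hbd : b ≠ d) (hcd : c ≠ d) :
    ∃ k : ℂ, ∀ x ∈ W, Matrix.SpecialLinearGroup.toLin' A x = k • x := by
  obtain ⟨p, hpa, hpb⟩ := lines_meet (hline _ ha) (hline _ hb)
  obtain ⟨q, hqa, hqc⟩ := lines_meet (hline _ ha) (hline _ hc)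
  obtain ⟨r, hra, hrd⟩ := lines_meet (hline _ ha) (hline _ hd)
  have hpq : p ≠ q := by
    rintro rfl
    rcases hpos p _ ha _ hb _ hc hpa hpb hqc with h | h | h <;> contradiction
  have hpr : p ≠ r := by
    rintro rfl
    rcases hpos p _ ha _ hb _ hd hpa hpb hrd with h | h | h <;> contradiction
  have hqr : q ≠ r := by
    rintro rfl
    rcases hpos q _ ha _ hc _ hd hqa hqc hrd with h | h | h <;> contradiction
  have fp := fixes_crossing (hline _ ha) (hline _ hb) hab (hA _ ha) (hA _ hb) hpa hpb
  have fq := fixes_crossing (hline _ ha) (hline _ hc) hac (hA _ ha) (hA _ hc) hqa hqc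
  have fr := fixes_crossing (hline _ ha) (hline _ hd) had (hA _ ha) (hA _ hd) hra hrd
  rw [pact_mk] at fp fq fr
  exact scalar_on_line hW hpq hpr hqr (rep_mem_iff.mp hpa) (rep_mem_iff.mp hqa)
    (rep_mem_iff.mp hra) fp fq fr

/-- A lift to `SL(3,ℂ)` is a scalar on the planes of two of the lines; these planes meet
nontrivially and together span `ℂ³`. -/
lemma eq_one_of_four_lines {g : PSL3} {L : Set (Set P2)} (hpos : InGenPos L)
    (hline : ∀ ℓ ∈ L, IsLine ℓ) (h4 : 4 ≤ L.encard) (hg : ∀ ℓ ∈ L, pact g '' ℓ = ℓ) : g = 1 := by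
  obtain ⟨A, rfl⟩ := QuotientGroup.mk_surjective g
  obtain ⟨T, hT, hT4⟩ := Set.exists_subset_encard_eq h4
  obtain ⟨a, b, c, d, hab, hac, had, hbc, hbd, hcd, rfl⟩ := Set.encard_eq_four.mp hT4
  have ha : a ∈ L := hT (by simp)
  have hb : b ∈ L := hT (by simp)
  have hc : c ∈ L := hT (by simp)
  have hd : d ∈ L := hT (by simp)
  obtain ⟨p, hpa, hpb⟩ := lines_meet (hline _ ha) (hline _ hb)
  obtain ⟨W, hW, rfl⟩ := hline _ ha
  obtain ⟨W', hW', rfl⟩ := hline _ hb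
  obtain ⟨k, hk⟩ := scalar_of_four_lines hpos hline hg hW ha hb hc hd hab hac had hbc hbd hcd
  obtain ⟨k', hk'⟩ := scalar_of_four_lines hpos hline hg hW' hb ha hc hd hab.symm hbc hbd hac
    had hcd
  have hkk : k = k' := by
    have h1 := hk _ (rep_mem_iff.mp hpa)
    rw [hk' _ (rep_mem_iff.mp hpb)] at h1
    exact (smul_left_injective ℂ p.rep_nonzero h1).symm
  subst hkk
  have hlt : W < W ⊔ W' := by
    refine lt_of_le_of_ne le_sup_left fun h => hab ?_
    have hle : W' ≤ W := by
      rw [h]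
      exact le_sup_right
    rw [Submodule.eq_of_le_of_finrank_eq hle (by rw [hW, hW'])]
  have htop : W ⊔ W' = ⊤ := by
    apply Submodule.eq_top_of_finrank_eq
    have h1 := Submodule.finrank_lt_finrank_of_lt hlt
    have h2 := Submodule.finrank_le (W ⊔ W')
    have h3 : Module.finrank ℂ V3 = 3 := by simp
    omega
  have hall : ∀ x : V3, Matrix.SpecialLinearGroup.toLin' A x = k • x := by
    intro x
    have hx : x ∈ W ⊔ W' := htop ▸ Submodule.mem_top
    obtain ⟨y, hy, z, hz, rfl⟩ := Submodule.mem_sup.mp hx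
    rw [map_add, hk _ hy, hk' _ hz, smul_add]
  have hmat : Matrix.scalar (Fin 3) k = (A : Matrix (Fin 3) (Fin 3) ℂ) := by
    apply Matrix.toLin'.injective
    apply LinearMap.ext
    intro x
    have := hall x
    rw [Matrix.SpecialLinearGroup.toLin'_apply] at this
    rw [this]
    ext i
    simp [Matrix.toLin'_apply, Matrix.scalar, Matrix.mulVec_diagonal]
  rw [QuotientGroup.eq_one_iff, Matrix.SpecialLinearGroup.mem_center_iff]
  refine ⟨k, ?_, hmat⟩
  have hdet := A.det_coe
  rw [← hmat] at hdet
  simpa using hdet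

/-! ### Invariance of `Ω` -/

lemma pact_mul (g h : PSL3) (x : P2) : pact (g * h) x = pact g (pact h x) := by simp [pact]

lemma pact_inv_pact (g : PSL3) (x : P2) : pact g⁻¹ (pact g x) = x := by simp [pact]

lemma pact_pact_inv (g : PSL3) (x : P2) : pact g (pact g⁻¹ x) = x := by simp [pact]

/-- The action of an element of `PSL(3,ℂ)` on `ℙ²`, as a homeomorphism. -/
def pactHomeo (g : PSL3) : P2 ≃ₜ P2 where
  toFun := pact g
  invFun := pact g⁻¹
  left_inv := pact_inv_pact g
  right_inv := pact_pact_inv g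
  continuous_toFun := continuous_pact g
  continuous_invFun := continuous_pact g⁻¹

lemma mapsTo_closure {g : PSL3} {S : Set P2} (h : ∀ z ∈ S, pact g z ∈ S) :
    ∀ z ∈ closure S, pact g z ∈ closure S :=
  fun _ hz => map_mem_closure (continuous_pact g) hz h

lemma L0_invariant {Γ : Subgroup PSL3} {g : PSL3} (hg : g ∈ Γ) :
    ∀ z ∈ L0 Γ, pact g z ∈ L0 Γ := by
  apply mapsTo_closure
  intro z hz
  refine (hz.image (f := fun δ => g * δ * g⁻¹) (fun a _ b _ h => by simpa using h)).mono ?_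
  rintro _ ⟨δ, ⟨hδ, hδz⟩, rfl⟩
  exact ⟨Γ.mul_mem (Γ.mul_mem hg hδ) (Γ.inv_mem hg), by
    rw [pact_mul, pact_mul, pact_inv_pact, hδz]⟩

lemma setCluster_invariant {Γ : Subgroup PSL3} {g : PSL3} (hg : g ∈ Γ) (K : Set P2) :
    ∀ w ∈ setCluster Γ K, pact g w ∈ setCluster Γ K := by
  intro w hw U hU
  refine ((hw _ ((continuous_pact g).continuousAt hU)).image (f := fun δ => g * δ)
    (fun a _ b _ h => by simpa using h)).mono ?_
  rintro _ ⟨δ, ⟨hδ, _, ⟨x, hx, rfl⟩, hxU⟩, rfl⟩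
  exact ⟨Γ.mul_mem hg hδ, _, ⟨x, hx, rfl⟩, by rw [pact_mul]; exact hxU⟩

lemma orbitCluster_eq (Γ : Subgroup PSL3) (z : P2) : orbitCluster Γ z = setCluster Γ {z} := by
  simp [orbitCluster, setCluster]

lemma kulkarniLimit_invariant {Γ : Subgroup PSL3} {g : PSL3} (hg : g ∈ Γ) :
    ∀ z ∈ kulkarniLimit Γ, pact g z ∈ kulkarniLimit Γ := by
  rintro z ((hz | hz) | hz)
  · exact Or.inl (Or.inl (L0_invariant hg z hz))
  · refine Or.inl (Or.inr (mapsTo_closure ?_ z hz))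
    intro w hw
    simp only [Set.mem_iUnion, orbitCluster_eq] at hw ⊢
    obtain ⟨x, hx, hw⟩ := hw
    exact ⟨x, hx, setCluster_invariant hg _ w hw⟩
  · refine Or.inr (mapsTo_closure ?_ z hz)
    intro w hw
    simp only [Set.mem_iUnion] at hw ⊢
    obtain ⟨K, hK, hw⟩ := hw
    exact ⟨K, hK, setCluster_invariant hg _ w hw⟩

/-- Precomposition with `g⁻¹` carries the restrictions of `Γ` to `U` onto its restrictions
to `g U`. -/
lemma eqSet_invariant {Γ : Subgroup PSL3} {g : PSL3} (hg : g ∈ Γ) :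
    ∀ z ∈ eqSet Γ, pact g z ∈ eqSet Γ := by
  rintro z ⟨U, hU, hzU, hc⟩
  refine ⟨pact g '' U, (pactHomeo g).isOpenMap U hU, Set.mem_image_of_mem _ hzU, ?_⟩
  let e : U ≃ₜ (pact g '' U) := (pactHomeo g).image U
  let Φ : C(U, P2) ≃ₜ C(pact g '' U, P2) := e.arrowCongr (Homeomorph.refl P2)
  have he : ∀ y : (pact g '' U), ((e.symm y : U) : P2) = pact g⁻¹ (y : P2) := by
    intro y
    have h1 : ((e (e.symm y) : (pact g '' U)) : P2) = pact g ((e.symm y : U) : P2) := rfl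
    rw [e.apply_symm_apply] at h1
    rw [h1, pact_inv_pact]
  have hΦ : ∀ (δ : PSL3), Φ ((pactCM δ).restrict U) =
      (pactCM (δ * g⁻¹)).restrict (pact g '' U) := by
    intro δ
    ext y
    show pact δ ((e.symm y : U) : P2) = pact (δ * g⁻¹) (y : P2)
    rw [he, pact_mul]
  have himg : {f : C(pact g '' U, P2) | ∃ γ ∈ Γ, f = (pactCM γ).restrict (pact g '' U)} =
      Φ '' {f : C(U, P2) | ∃ γ ∈ Γ, f = (pactCM γ).restrict U} := by
    ext f
    constructor
    · rintro ⟨γ, hγ, rfl⟩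
      exact ⟨_, ⟨γ * g, Γ.mul_mem hγ hg, rfl⟩, by rw [hΦ, mul_inv_cancel_right]⟩
    · rintro ⟨_, ⟨γ, hγ, rfl⟩, rfl⟩
      exact ⟨γ * g⁻¹, Γ.mul_mem hγ (Γ.inv_mem hg), hΦ γ⟩
  rw [himg, ← Φ.image_closure]
  exact hc.image Φ.continuous

lemma omega_invariant {Γ : Subgroup PSL3} {Ω : Set P2}
    (hΩ : Ω = eqSet Γ ∨ Ω = kulkarniRegion Γ ∨ MaxDisc Γ Ω) {g : PSL3} (hg : g ∈ Γ) :
    ∀ z ∈ Ω, pact g z ∈ Ω := by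
  rcases hΩ with rfl | rfl | h
  · exact eqSet_invariant hg
  · intro z hz hc
    apply hz
    rw [← pact_inv_pact g z]
    exact kulkarniLimit_invariant (Γ.inv_mem hg) _ hc
  · intro z hz
    rw [← h.1.2.2.1 g hg]
    exact Set.mem_image_of_mem _ hz

lemma linesIn_image {Γ : Subgroup PSL3} {Ω : Set P2}
    (hΩ : Ω = eqSet Γ ∨ Ω = kulkarniRegion Γ ∨ MaxDisc Γ Ω) {g : PSL3} (hg : g ∈ Γ)
    {ℓ : Set P2} (hℓ : ℓ ∈ linesIn Ωᶜ) : pact g '' ℓ ∈ linesIn Ωᶜ := by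
  refine ⟨isLine_image g hℓ.1, ?_⟩
  rintro _ ⟨x, hx, rfl⟩ hc
  apply hℓ.2 hx
  rw [← pact_inv_pact g x]
  exact omega_invariant hΩ (Γ.inv_mem hg) _ hc

/-! ### Finite groups -/

instance : T1Space P2 := by
  refine ⟨fun p => ?_⟩
  have hq : IsQuotientMap (Projectivization.mk' ℂ : {v : V3 // v ≠ 0} → P2) :=
    isQuotientMap_quotient_mk'
  rw [← hq.isClosed_preimage]
  have : Projectivization.mk' ℂ ⁻¹' {p} =
      (Subtype.val : {v : V3 // v ≠ 0} → V3) ⁻¹' (Submodule.span ℂ {p.rep} : Set V3) := by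
    ext ⟨v, hv⟩
    simp only [Set.mem_preimage, Set.mem_singleton_iff, Projectivization.mk'_eq_mk, SetLike.mem_coe,
      Submodule.mem_span_singleton]
    rw [← Projectivization.mk_rep p, Projectivization.mk_eq_mk_iff', Projectivization.mk_rep]
  rw [this]
  exact (Submodule.closed_of_finiteDimensional _).preimage continuous_subtype_val

lemma setCluster_of_finite {Γ : Subgroup PSL3} (h : (Γ : Set PSL3).Finite) (K : Set P2) :
    setCluster Γ K = ∅ := by
  ext w
  simp only [Set.mem_empty_iff_false, iff_false]
  intro hw
  exact hw Set.univ Filter.univ_mem (h.subset fun γ hγ => hγ.1)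

lemma omega_eq_univ_of_finite {Γ : Subgroup PSL3} {Ω : Set P2}
    (hΩ : Ω = eqSet Γ ∨ Ω = kulkarniRegion Γ ∨ MaxDisc Γ Ω) (h : (Γ : Set PSL3).Finite) :
    Ω = Set.univ := by
  rcases hΩ with rfl | rfl | hm
  · refine Set.eq_univ_of_forall fun z => ⟨Set.univ, isOpen_univ, Set.mem_univ z, ?_⟩
    have hf : {f : C((Set.univ : Set P2), P2) | ∃ γ ∈ Γ, f = (pactCM γ).restrict Set.univ}.Finite :=
      (h.image fun γ => (pactCM γ).restrict Set.univ).subset (by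
        rintro _ ⟨γ, hγ, rfl⟩
        exact ⟨γ, hγ, rfl⟩)
    rw [hf.isClosed.closure_eq]
    exact hf.isCompact
  · have h0 : {z : P2 | {γ : PSL3 | γ ∈ Γ ∧ pact γ z = z}.Infinite} = ∅ := by
      ext z
      simp only [Set.mem_ofPred_eq, Set.mem_empty_iff_false, iff_false]
      intro hz
      exact hz (h.subset fun γ hγ => hγ.1)
    simp [kulkarniRegion, kulkarniLimit, L0, L1, L2, h0, orbitCluster_eq, setCluster_of_finite h]
  · refine (hm.2 Set.univ ⟨?_, isOpen_univ, ?_, ?_⟩ (Set.subset_univ _)).symm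
    · exact hm.1.1.mono (Set.subset_univ _)
    · intro γ _
      exact Set.image_univ_of_surjective (pactHomeo γ).surjective
    · intro K _ _
      exact h.subset fun γ hγ => hγ.1

/-! ### Crossings of a maximal family -/

/-- The points lying on two distinct lines of the family `L`. -/
def crossings (L : Set (Set P2)) : Set P2 :=
  {p | ∃ ℓ₁ ∈ L, ∃ ℓ₂ ∈ L, ℓ₁ ≠ ℓ₂ ∧ p ∈ ℓ₁ ∧ p ∈ ℓ₂}

lemma crossings_finite {L : Set (Set P2)} (hline : ∀ ℓ ∈ L, IsLine ℓ) (hfin : L.Finite) :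
    (crossings L).Finite := by
  have h1 : (⋃ t ∈ {t ∈ L ×ˢ L | t.1 ≠ t.2}, (t.1 ∩ t.2)).Finite := by
    refine ((hfin.prod hfin).subset (Set.sep_subset _ _)).biUnion ?_
    rintro ⟨ℓ₁, ℓ₂⟩ ⟨⟨h₁, h₂⟩, hne⟩
    refine Set.Subsingleton.finite fun p hp q hq => ?_
    by_contra hpq
    exact hne (line_unique (hline _ h₁) (hline _ h₂) hpq hp.1 hq.1 hp.2 hq.2)
  refine h1.subset ?_
  rintro p ⟨ℓ₁, h₁, ℓ₂, h₂, hne, hp₁, hp₂⟩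
  exact Set.mem_biUnion (x := (ℓ₁, ℓ₂)) ⟨⟨h₁, h₂⟩, hne⟩ ⟨hp₁, hp₂⟩

lemma exists_crossing {Ω : Set P2} {L : Set (Set P2)} (hL : L ∈ genFamilies Ω)
    (hcard : L.encard = LiG Ω) (hfin : L.Finite) (h4 : 4 ≤ L.encard)
    {ℓ : Set P2} (hℓ : ℓ ∈ linesIn Ωᶜ) : ∃ p ∈ crossings L, p ∈ ℓ := by
  by_cases hmem : ℓ ∈ L
  · obtain ⟨ℓ', hℓ', hne⟩ : ∃ ℓ' ∈ L, ℓ' ≠ ℓ := by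
      apply Set.exists_ne_of_one_lt_encard
      exact lt_of_lt_of_le (by norm_num) h4
    obtain ⟨p, hp, hp'⟩ := lines_meet hℓ.1 (hL.1 _ hℓ').1
    exact ⟨p, ⟨ℓ, hmem, ℓ', hℓ', hne.symm, hp, hp'⟩, hp⟩
  · by_contra hno
    have hno' : ∀ p ∈ ℓ, ∀ ℓ₁ ∈ L, ∀ ℓ₂ ∈ L, p ∈ ℓ₁ → p ∈ ℓ₂ → ℓ₁ = ℓ₂ := by
      intro p hp ℓ₁ h₁ ℓ₂ h₂ hp₁ hp₂
      by_contra hne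
      exact hno ⟨p, ⟨ℓ₁, h₁, ℓ₂, h₂, hne, hp₁, hp₂⟩, hp⟩
    have hins : insert ℓ L ∈ genFamilies Ω := by
      refine ⟨?_, ?_⟩
      · rintro m (rfl | hm)
        · exact hℓ
        · exact hL.1 m hm
      · intro p a ha b hb c hc hpa hpb hpc
        rcases ha with rfl | ha
        · rcases hb with rfl | hb
          · exact Or.inl rfl
          · rcases hc with rfl | hc
            · exact Or.inr (Or.inl rfl)
            · exact Or.inr (Or.inr (hno' p hpa b hb c hc hpb hpc))
        · rcases hb with rfl | hb
          · rcases hc with rfl | hc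
            · exact Or.inr (Or.inr rfl)
            · exact Or.inr (Or.inl (hno' p hpb a ha c hc hpa hpc))
          · rcases hc with rfl | hc
            · exact Or.inl (hno' p hpc a ha b hb hpa hpb)
            · exact hL.2 p a ha b hb c hc hpa hpb hpc
    have hle : (insert ℓ L).encard ≤ LiG Ω :=
      le_iSup₂ (f := fun (M : Set (Set P2)) (_ : M ∈ genFamilies Ω) => M.encard) _ hins
    rw [← hcard, Set.encard_insert_of_notMem hmem] at hle
    have htop : L.encard ≠ ⊤ := hfin.encard_lt_top.ne
    exact absurd hle (not_le.mpr (ENat.lt_add_one_iff htop |>.mpr le_rfl))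

/-- The points lying on infinitely many lines of the complement of `Ω`. -/
def pencilPoints (Ω : Set P2) : Set P2 := {p | {ℓ ∈ linesIn Ωᶜ | p ∈ ℓ}.Infinite}

lemma pencilPoints_subset {Ω : Set P2} {L : Set (Set P2)} (hfin : (crossings L).Finite)
    (hcross : ∀ ℓ ∈ linesIn Ωᶜ, ∃ p ∈ crossings L, p ∈ ℓ) : pencilPoints Ω ⊆ crossings L := by
  intro p hp
  by_contra hpL
  apply hp
  have h1 : (⋃ q ∈ crossings L, {ℓ | IsLine ℓ ∧ p ∈ ℓ ∧ q ∈ ℓ}).Finite := by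
    refine hfin.biUnion fun q hq => Set.Subsingleton.finite ?_
    rintro a ⟨ha, hpa, hqa⟩ b ⟨hb, hpb, hqb⟩
    have hpq : p ≠ q := by
      rintro rfl
      exact hpL hq
    exact line_unique ha hb hpq hpa hqa hpb hqb
  refine h1.subset ?_
  rintro ℓ ⟨hℓ, hpℓ⟩
  obtain ⟨q, hq, hqℓ⟩ := hcross ℓ hℓ
  exact Set.mem_biUnion hq ⟨hℓ.1, hpℓ, hqℓ⟩

lemma pencilPoints_invariant {Γ : Subgroup PSL3} {Ω : Set P2}
    (hΩ : Ω = eqSet Γ ∨ Ω = kulkarniRegion Γ ∨ MaxDisc Γ Ω) {g : PSL3} (hg : g ∈ Γ) :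
    ∀ p ∈ pencilPoints Ω, pact g p ∈ pencilPoints Ω := by
  intro p hp
  refine (Set.Infinite.image (f := fun ℓ : Set P2 => pact g '' ℓ)
    ((Set.image_injective.mpr (pactHomeo g).injective).injOn) hp).mono ?_
  rintro _ ⟨ℓ, ⟨hℓ, hpℓ⟩, rfl⟩
  exact ⟨linesIn_image hΩ hg hℓ, Set.mem_image_of_mem _ hpℓ⟩

/-- An element of `Γ` is determined by the images of the lines of `L`, so finiteness of the set of
lines in `Ωᶜ` would make `Γ` finite and `Ωᶜ` empty. -/
lemma linesIn_infinite {Γ : Subgroup PSL3} {Ω : Set P2}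
    (hΩ : Ω = eqSet Γ ∨ Ω = kulkarniRegion Γ ∨ MaxDisc Γ Ω)
    {L : Set (Set P2)} (hL : L ∈ genFamilies Ω) (hLfin : L.Finite) (h4 : 4 ≤ L.encard) :
    (linesIn Ωᶜ).Infinite := by
  intro hfin
  have := hfin.to_subtype
  have := hLfin.to_subtype
  let F : Γ → (L → linesIn Ωᶜ) := fun γ ℓ => ⟨pact γ '' ℓ, linesIn_image hΩ γ.2 (hL.1 ℓ ℓ.2)⟩
  have hF : Function.Injective F := by
    intro γ δ hγδ
    have h1 : ∀ ℓ ∈ L, pact (γ : PSL3) '' ℓ = pact (δ : PSL3) '' ℓ := fun ℓ hℓ =>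
      congrArg Subtype.val (congrFun hγδ ⟨ℓ, hℓ⟩)
    have h2 : (δ : PSL3)⁻¹ * γ = 1 := by
      refine eq_one_of_four_lines hL.2 (fun ℓ hℓ => (hL.1 ℓ hℓ).1) h4 fun ℓ hℓ => ?_
      have h3 : pact ((δ : PSL3)⁻¹ * γ) = pact (δ : PSL3)⁻¹ ∘ pact (γ : PSL3) :=
        funext (pact_mul _ _)
      rw [h3, Set.image_comp, h1 ℓ hℓ, ← Set.image_comp]
      have h4 : pact (δ : PSL3)⁻¹ ∘ pact (δ : PSL3) = id := funext (pact_inv_pact _)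
      rw [h4, Set.image_id]
    exact Subtype.ext (inv_mul_eq_one.mp h2).symm
  have hΓ : Finite Γ := Finite.of_injective F hF
  have huniv := omega_eq_univ_of_finite hΩ (Set.toFinite (Γ : Set PSL3))
  obtain ⟨ℓ, hℓ⟩ : L.Nonempty := by
    rw [← Set.encard_pos]
    exact lt_of_lt_of_le (by norm_num) h4
  obtain ⟨p, hp, -⟩ := lines_meet (hL.1 ℓ hℓ).1 (hL.1 ℓ hℓ).1
  exact (hL.1 ℓ hℓ).2 hp (huniv ▸ Set.mem_univ p)

theorem exists_vertex_and_stabilizer_finite_index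
    (Γ : Subgroup PSL3) (hΓ : DiscreteTopology ↥Γ) (Ω : Set P2)
    (hΩ : Ω = eqSet Γ ∨ Ω = kulkarniRegion Γ ∨ MaxDisc Γ Ω)
    (h4 : 4 ≤ LiG Ω) (hfin : LiG Ω ≠ ⊤)
    (L : Set (Set P2)) (hL : L ∈ genFamilies Ω) (hcard : L.encard = LiG Ω) :
    (∃ v : P2, IsVertex Ω L v) ∧
    ∀ v : P2, IsVertex Ω L v → (MulAction.stabilizer ↥Γ v).FiniteIndex := by
  have h4' : 4 ≤ L.encard := hcard ▸ h4
  have hLfin : L.Finite := Set.encard_ne_top_iff.mp (hcard ▸ hfin)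
  have hcfin : (crossings L).Finite := crossings_finite (fun ℓ hℓ => (hL.1 ℓ hℓ).1) hLfin
  have hcross : ∀ ℓ ∈ linesIn Ωᶜ, ∃ p ∈ crossings L, p ∈ ℓ := fun ℓ hℓ =>
    exists_crossing hL hcard hLfin h4' hℓ
  constructor
  · obtain ⟨p, hp, hinf⟩ : ∃ p ∈ crossings L, {ℓ ∈ linesIn Ωᶜ | p ∈ ℓ}.Infinite := by
      by_contra! hno
      refine linesIn_infinite hΩ hL hLfin h4' ?_
      refine (hcfin.biUnion (t := fun p => {ℓ ∈ linesIn Ωᶜ | p ∈ ℓ}) fun p hp => ?_).subset ?_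
      · exact hno p hp
      · intro ℓ hℓ
        obtain ⟨p, hp, hpℓ⟩ := hcross ℓ hℓ
        exact Set.mem_biUnion hp ⟨hℓ, hpℓ⟩
    obtain ⟨ℓ₁, h₁, ℓ₂, h₂, hne, hp₁, hp₂⟩ := hp
    refine ⟨p, ℓ₁, h₁, ℓ₂, h₂, hne, _, hinf, fun ℓ hℓ => hℓ.1, ?_⟩
    ext q
    constructor
    · rintro ⟨⟨hq₁, hq₂⟩, -⟩
      by_contra hqp
      exact hne (line_unique (hL.1 _ h₁).1 (hL.1 _ h₂).1 hqp hq₁ hp₁ hq₂ hp₂)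
    · rintro rfl
      exact ⟨⟨hp₁, hp₂⟩, fun ℓ hℓ => hℓ.2⟩
  · rintro v ⟨ℓ₁, -, ℓ₂, -, -, C, hC, hCl, hv⟩
    have hvC : ∀ ℓ ∈ C, v ∈ ℓ := by
      have : v ∈ ℓ₁ ∩ ℓ₂ ∩ ⋂₀ C := hv ▸ rfl
      exact this.2
    have hvp : v ∈ pencilPoints Ω := hC.mono fun ℓ hℓ => ⟨hCl ℓ hℓ, hvC ℓ hℓ⟩
    have horb : (MulAction.orbit ↥Γ v).Finite := by
      refine hcfin.subset (Set.Subset.trans ?_ (pencilPoints_subset hcfin hcross))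
      rintro _ ⟨γ, rfl⟩
      exact pencilPoints_invariant hΩ γ.2 v hvp
    refine ⟨?_⟩
    rw [MulAction.index_stabilizer]
    exact Set.ncard_ne_zero_of_mem (MulAction.mem_orbit_self v) horb
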